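/- Let k = 2d with d ≥ 1 and π ∈ S_k with ν(π) > 2. If j = π(1) is free, then there exists τ ∈ S_k related to π by a single prefix reversal such that ν(π) − ν(τ) ≥ 1. -/

import Mathlib

/-- `π` and `τ` are related by a prefix reversal: there is `t ≤ k` such that the first `t`
entries are reversed and the remaining entries agree (0-indexed form of the paper's
1-indexed definition). -/
def PrefixRev (k : ℕ) (π τ : Equiv.Perm (Fin k)) : Prop :=
  ∃ t : ℕ, ∃ ht : t ≤ k,
    (∀ i : Fin k, t ≤ (i : ℕ) → π i = τ i) ∧
    (∀ i : Fin k, ∀ hi : (i : ℕ) < t, π i = τ ⟨t - 1 - (i : ℕ), by omega⟩)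

/-- `π` and `τ` are related by a suffix reversal: there is `t` such that the entries at
positions `< t` agree and the remaining entries are reversed. -/
def SuffixRev (k : ℕ) (π τ : Equiv.Perm (Fin k)) : Prop :=
  ∃ t : ℕ,
    (∀ i : Fin k, (i : ℕ) < t → π i = τ i) ∧
    (∀ i : Fin k, ∀ hi : t ≤ (i : ℕ), π i = τ ⟨k - 1 - (i : ℕ) + t, by
      have := i.isLt; omega⟩)

/-- The pancake graph `P_k`, whose edges are prefix reversals. -/
def pancakeGraph (k : ℕ) : SimpleGraph (Equiv.Perm (Fin k)) :=
  SimpleGraph.fromRel (PrefixRev k)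

/-- The graph `G_k`, whose edges are prefix and suffix reversals. -/
def prefixSuffixGraph (k : ℕ) : SimpleGraph (Equiv.Perm (Fin k)) :=
  SimpleGraph.fromRel (fun π τ => PrefixRev k π τ ∨ SuffixRev k π τ)

/-- The values of `π` at positions `p` and `q` differ by `1`, or are `{1, k}`
(1-indexed), i.e. `{0, k - 1}` in this 0-indexed formalization. -/
def PiAdjacency (k : ℕ) (π : Equiv.Perm (Fin k)) (p q : Fin k) : Prop :=
  (((π p : ℕ) : ℤ) - ((π q : ℕ) : ℤ)).natAbs = 1 ∨
    ({(π p : ℕ), (π q : ℕ)} : Set ℕ) = {0, k - 1}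

/-- Positions `i` and `i + 1` (0-indexed) form a `π`-adjacency. -/
def PosAdjacency (k : ℕ) (π : Equiv.Perm (Fin k)) (i : ℕ) : Prop :=
  ∃ h : i + 1 < k, PiAdjacency k π ⟨i, by omega⟩ ⟨i + 1, h⟩

/-- The equivalence relation `∼_π`: `a ∼_π b` iff every pair of consecutive positions
between the position of `a` and the position of `b` is a `π`-adjacency. -/
def Sim (k : ℕ) (π : Equiv.Perm (Fin k)) (a b : Fin k) : Prop :=
  ∀ i : ℕ, min ((π.symm a : ℕ)) ((π.symm b : ℕ)) ≤ i →
    i < max ((π.symm a : ℕ)) ((π.symm b : ℕ)) → PosAdjacency k π i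

/-- `∼_π` has exactly one equivalence class on `[k]`. -/
def OneClass (k : ℕ) (π : Equiv.Perm (Fin k)) : Prop :=
  ∀ a b : Fin k, Sim k π a b

/-- The pairing `φ(j) = j + o_j`, swapping `2i - 1 ↔ 2i` (1-indexed),
i.e. `2i ↔ 2i + 1` (0-indexed). -/
def partner (d : ℕ) (j : Fin (2 * d)) : Fin (2 * d) :=
  ⟨if (j : ℕ) % 2 = 0 then (j : ℕ) + 1 else (j : ℕ) - 1, by
    have := j.isLt; split <;> omega⟩

/-- The equivalence relation `≈_π`. -/
def ApproxSim (d : ℕ) (π : Equiv.Perm (Fin (2 * d))) (a b : Fin (2 * d)) : Prop :=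
  a = b ∨ (Sim (2 * d) π a b ∧ Sim (2 * d) π a (partner d a) ∧
    Sim (2 * d) π b (partner d b))

/-- `j` is free, i.e. `{j}` is an equivalence class (a singleton) of `≈_π`. -/
def IsFree (d : ℕ) (π : Equiv.Perm (Fin (2 * d))) (j : Fin (2 * d)) : Prop :=
  ∀ j' : Fin (2 * d), ApproxSim d π j j' → j' = j

/-- The `≈_π`-equivalence class of `j`, as a finite set. -/
noncomputable def classOf (d : ℕ) (π : Equiv.Perm (Fin (2 * d))) (j : Fin (2 * d)) :
    Finset (Fin (2 * d)) :=
  @Finset.filter _ (fun j' => ApproxSim d π j j') (Classical.decPred _) Finset.univ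

/-- `S(π)`, the number of singletons of `π`. -/
noncomputable def numSingletons (d : ℕ) (π : Equiv.Perm (Fin (2 * d))) : ℕ :=
  (@Finset.filter _ (fun j => IsFree d π j) (Classical.decPred _) Finset.univ).card

/-- `B(π)`, the number of blocks (equivalence classes of `≈_π` of size `> 1`) of `π`. -/
noncomputable def numBlocks (d : ℕ) (π : Equiv.Perm (Fin (2 * d))) : ℕ :=
  ((Finset.univ.image (classOf d π)).filter (fun C => 1 < C.card)).card

/-- The potential function `ν(π) = (3/2) S(π) + 2 B(π)`. -/
noncomputable def nu (d : ℕ) (π : Equiv.Perm (Fin (2 * d))) : ℚ :=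
  3 / 2 * (numSingletons d π : ℚ) + 2 * (numBlocks d π : ℚ)

/-- The unique element of `[k]` congruent to `j - o_j` modulo `k` (0-indexed form). -/
def prevVal (d : ℕ) (j : Fin (2 * d)) : Fin (2 * d) :=
  ⟨if (j : ℕ) % 2 = 0 then ((j : ℕ) + 2 * d - 1) % (2 * d) else ((j : ℕ) + 1) % (2 * d), by
    have := j.isLt; split <;> exact Nat.mod_lt _ (by omega)⟩

/-!
Reverse the prefix that ends just before `φ(j)`: this moves `j` next to `φ(j)`, and the only pair
of consecutive positions whose values change is the one at the cut. Every element strictly inside a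
run of adjacencies has both of its cyclic neighbours beside it, hence is not free. As `φ(j)` is
free, it lies at an end of its run, so the cut separates no two elements of a common block; thus
`≈_π` refines `≈_τ`. Since `j` and `φ(j)` stop being free, `S` drops by at least `2`. An element
that stops being free is joined to its partner across the cut, hence lies in the block of `j`, so
`B` grows by at most `1`. Altogether `ν` drops by at least `2 * (3/2) - 2 = 1`.
-/

/-- The values `a` and `b` are neighbours on the cycle `0, 1, …, k - 1, 0`; this is the relation
between values that makes two consecutive positions an adjacency. -/
def CyclicNeighbor {k : ℕ} (a b : Fin k) : Prop :=
  (a : ℕ) + 1 = b ∨ (b : ℕ) + 1 = a ∨ ((a : ℕ) = 0 ∧ (b : ℕ) = k - 1) ∨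
    ((b : ℕ) = 0 ∧ (a : ℕ) = k - 1)

/-- The permutation of positions that reverses the first `p` of them. -/
def prefixReversal {k p : ℕ} (hp : p ≤ k) : Equiv.Perm (Fin k) :=
  Function.Involutive.toPerm
    (fun i => ⟨if (i : ℕ) < p then p - 1 - i else i, by split_ifs <;> omega⟩)
    (fun i => Fin.ext <| by simp only; split_ifs <;> omega)

section Runs

variable {k : ℕ} {π : Equiv.Perm (Fin k)} {a b c x : Fin k} {i : ℕ}

protected theorem CyclicNeighbor.symm (h : CyclicNeighbor a b) : CyclicNeighbor b a := by
  unfold CyclicNeighbor at *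
  omega

theorem CyclicNeighbor.eq_or_eq_of_ne (ha : CyclicNeighbor a c) (hb : CyclicNeighbor b c)
    (hab : a ≠ b) (hx : CyclicNeighbor x c) : x = a ∨ x = b := by
  unfold CyclicNeighbor at *
  omega

theorem piAdjacency_iff_cyclicNeighbor {p q : Fin k} :
    PiAdjacency k π p q ↔ CyclicNeighbor (π p) (π q) := by
  unfold PiAdjacency CyclicNeighbor
  rw [Set.pair_eq_pair_iff]
  omega

theorem posAdjacency_iff_exists_cyclicNeighbor :
    PosAdjacency k π i ↔
      ∃ a b, (π.symm a : ℕ) = i ∧ (π.symm b : ℕ) = i + 1 ∧ CyclicNeighbor a b := by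
  constructor
  · rintro ⟨hi, hadj⟩
    exact ⟨_, _, by rw [π.symm_apply_apply], by rw [π.symm_apply_apply],
      piAdjacency_iff_cyclicNeighbor.1 hadj⟩
  · rintro ⟨a, b, rfl, hb, hab⟩
    refine ⟨hb ▸ (π.symm b).isLt, piAdjacency_iff_cyclicNeighbor.2 ?_⟩
    simpa only [← hb, Fin.eta, π.apply_symm_apply] using hab

theorem eq_of_val_symm_eq (h : (π.symm a : ℕ) = π.symm b) : a = b :=
  π.symm.injective (Fin.ext h)

protected theorem Sim.symm (h : Sim k π a b) : Sim k π b a :=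
  fun i _ _ => h i (by omega) (by omega)

theorem Sim.of_between (h : Sim k π a b)
    (hmin : min (π.symm a : ℕ) (π.symm b) ≤ π.symm c)
    (hmax : (π.symm c : ℕ) ≤ max (π.symm a : ℕ) (π.symm b)) : Sim k π a c :=
  fun i _ _ => h i (by omega) (by omega)

protected theorem Sim.trans (hab : Sim k π a b) (hbc : Sim k π b c) : Sim k π a c := by
  intro i hmin hmax
  by_cases hi : min (π.symm a : ℕ) (π.symm b) ≤ i ∧ i < max (π.symm a : ℕ) (π.symm b)
  · exact hab i hi.1 hi.2
  · exact hbc i (by omega) (by omega)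

theorem CyclicNeighbor.sim (h : CyclicNeighbor a b) (hpos : (π.symm a : ℕ) + 1 = π.symm b) :
    Sim k π a b := by
  intro i hmin hmax
  exact posAdjacency_iff_exists_cyclicNeighbor.2 ⟨a, b, by omega, by omega, h⟩

theorem Sim.sim_of_cyclicNeighbor (h : Sim k π a b) (hac : (π.symm a : ℕ) < π.symm c)
    (hcb : (π.symm c : ℕ) < π.symm b) (hx : CyclicNeighbor x c) : Sim k π x c := by
  obtain ⟨l, c', hl, hc', hlc⟩ := posAdjacency_iff_exists_cyclicNeighbor.1
    (h ((π.symm c : ℕ) - 1) (by omega) (by omega))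
  obtain ⟨c'', r, hc'', hr, hcr⟩ := posAdjacency_iff_exists_cyclicNeighbor.1
    (h (π.symm c) (by omega) (by omega))
  obtain rfl : c' = c := eq_of_val_symm_eq (π := π) (by omega)
  obtain rfl : c'' = c' := eq_of_val_symm_eq hc''
  have hlr : l ≠ r := by rintro rfl; omega
  rcases hlc.eq_or_eq_of_ne hcr.symm hlr hx with rfl | rfl
  · exact hlc.sim (by omega)
  · exact (hcr.sim hr.symm).symm

end Runs

section PrefixReversal

variable {k p : ℕ} {hp : p ≤ k} {π : Equiv.Perm (Fin k)} {a b : Fin k} {i i' : ℕ}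

theorem val_prefixReversal (j : Fin k) :
    (prefixReversal hp j : ℕ) = if (j : ℕ) < p then p - 1 - j else j := rfl

theorem val_symm_mul_prefixReversal :
    ((π * prefixReversal hp).symm a : ℕ) =
      if (π.symm a : ℕ) < p then p - 1 - (π.symm a : ℕ) else π.symm a := rfl

theorem prefixRev_mul_prefixReversal : PrefixRev k π (π * prefixReversal hp) := by
  refine ⟨p, hp, fun i hi => ?_, fun i hi => ?_⟩ <;>
  · refine congrArg π (Fin.ext ?_)
    simp only [val_prefixReversal]
    split_ifs <;> omega

theorem posAdjacency_mul_prefixReversal_iff_of_le (hi : p ≤ i) :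
    PosAdjacency k (π * prefixReversal hp) i ↔ PosAdjacency k π i := by
  simp only [posAdjacency_iff_exists_cyclicNeighbor, val_symm_mul_prefixReversal]
  refine exists₂_congr fun a b => ?_
  rw [← and_assoc, ← and_assoc]
  refine and_congr_left' ?_
  split_ifs <;> omega

theorem posAdjacency_mul_prefixReversal_iff_of_add_eq (hi : i + i' + 2 = p) :
    PosAdjacency k (π * prefixReversal hp) i ↔ PosAdjacency k π i' := by
  simp only [posAdjacency_iff_exists_cyclicNeighbor, val_symm_mul_prefixReversal]
  constructor <;>
  · rintro ⟨a, b, ha, hb, hab⟩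
    refine ⟨b, a, ?_, ?_, hab.symm⟩ <;> split_ifs at * <;> omega

theorem sim_mul_prefixReversal_iff_of_lt (ha : (π.symm a : ℕ) < p) (hb : (π.symm b : ℕ) < p) :
    Sim k (π * prefixReversal hp) a b ↔ Sim k π a b := by
  unfold Sim
  rw [val_symm_mul_prefixReversal, val_symm_mul_prefixReversal, if_pos ha, if_pos hb]
  constructor <;> intro h i hmin hmax
  · exact (posAdjacency_mul_prefixReversal_iff_of_add_eq (i := p - 2 - i) (by omega)).1
      (h _ (by omega) (by omega))
  · exact (posAdjacency_mul_prefixReversal_iff_of_add_eq (i' := p - 2 - i) (by omega)).2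
      (h _ (by omega) (by omega))

theorem sim_mul_prefixReversal_iff_of_le (ha : p ≤ π.symm a) (hb : p ≤ π.symm b) :
    Sim k (π * prefixReversal hp) a b ↔ Sim k π a b := by
  unfold Sim
  rw [val_symm_mul_prefixReversal, val_symm_mul_prefixReversal, if_neg ha.not_gt,
    if_neg hb.not_gt]
  exact forall₃_congr fun i hmin _ => posAdjacency_mul_prefixReversal_iff_of_le (by omega)

theorem sim_mul_prefixReversal_iff (h : (π.symm a : ℕ) < p ↔ (π.symm b : ℕ) < p) :
    Sim k (π * prefixReversal hp) a b ↔ Sim k π a b := by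
  by_cases ha : (π.symm a : ℕ) < p
  · exact sim_mul_prefixReversal_iff_of_lt ha (h.1 ha)
  · exact sim_mul_prefixReversal_iff_of_le (not_lt.1 ha) (not_lt.1 (mt h.2 ha))

end PrefixReversal

section Classes

variable {d : ℕ} {π : Equiv.Perm (Fin (2 * d))} {a b : Fin (2 * d)}

theorem val_partner (a : Fin (2 * d)) :
    (partner d a : ℕ) = if (a : ℕ) % 2 = 0 then (a : ℕ) + 1 else (a : ℕ) - 1 := rfl

theorem partner_partner (a : Fin (2 * d)) : partner d (partner d a) = a := by
  ext
  simp only [val_partner]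
  split_ifs <;> omega

theorem partner_ne (a : Fin (2 * d)) : partner d a ≠ a := by
  rw [Ne, Fin.ext_iff, val_partner]
  split_ifs <;> omega

theorem cyclicNeighbor_partner (a : Fin (2 * d)) : CyclicNeighbor a (partner d a) := by
  unfold CyclicNeighbor
  rw [val_partner]
  split_ifs <;> omega

theorem not_isFree_iff_sim_partner : ¬ IsFree d π a ↔ Sim (2 * d) π a (partner d a) := by
  constructor
  · intro h
    by_contra hsim
    exact h fun b hab => hab.elim Eq.symm fun hab => absurd hab.2.1 hsim
  · intro hsim hfree
    refine partner_ne a (hfree _ (Or.inr ⟨hsim, hsim, ?_⟩))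
    rw [partner_partner]
    exact hsim.symm

theorem isFree_partner_iff : IsFree d π (partner d a) ↔ IsFree d π a := by
  rw [← not_iff_not, not_isFree_iff_sim_partner, not_isFree_iff_sim_partner, partner_partner]
  exact ⟨Sim.symm, Sim.symm⟩

theorem approxSim_iff :
    ApproxSim d π a b ↔ a = b ∨ Sim (2 * d) π a b ∧ ¬ IsFree d π a ∧ ¬ IsFree d π b := by
  rw [not_isFree_iff_sim_partner, not_isFree_iff_sim_partner, ApproxSim]

theorem approxSim_equivalence : Equivalence (ApproxSim d π) where
  refl _ := Or.inl rfl
  symm := by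
    rintro a b (rfl | ⟨hab, ha, hb⟩)
    · exact Or.inl rfl
    · exact Or.inr ⟨hab.symm, hb, ha⟩
  trans := by
    rintro a b c (rfl | ⟨hab, ha, hb⟩) hbc
    · exact hbc
    · rcases hbc with rfl | ⟨hbc, -, hc⟩
      · exact Or.inr ⟨hab, ha, hb⟩
      · exact Or.inr ⟨hab.trans hbc, ha, hc⟩

theorem mem_classOf : b ∈ classOf d π a ↔ ApproxSim d π a b := by
  simp only [classOf, Finset.mem_filter, Finset.mem_univ, true_and]

theorem classOf_eq_classOf_iff : classOf d π a = classOf d π b ↔ ApproxSim d π a b := by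
  constructor
  · intro h
    rw [← mem_classOf, h, mem_classOf]
    exact approxSim_equivalence.refl b
  · intro h
    ext c
    rw [mem_classOf, mem_classOf]
    exact ⟨approxSim_equivalence.trans (approxSim_equivalence.symm h),
      approxSim_equivalence.trans h⟩

theorem one_lt_card_classOf_iff : 1 < (classOf d π a).card ↔ ¬ IsFree d π a := by
  have ha : a ∈ classOf d π a := mem_classOf.2 (approxSim_equivalence.refl a)
  rw [Finset.one_lt_card_iff_nontrivial, Finset.nontrivial_iff_ne_singleton ha, Ne,
    Finset.eq_singleton_iff_unique_mem, not_iff_not]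
  simp only [ha, true_and, mem_classOf, IsFree]

end Classes

section Potential

theorem card_image_le_card_image_of_factorsThrough {α β γ : Type*} [DecidableEq β]
    [DecidableEq γ] {f : α → β} {g : α → γ} (h : g.FactorsThrough f) (s : Finset α) :
    (s.image g).card ≤ (s.image f).card := by
  cases isEmpty_or_nonempty γ
  · simp [Finset.eq_empty_of_isEmpty]
  · obtain ⟨e, rfl⟩ := (Function.factorsThrough_iff g).1 h
    rw [← Finset.image_image]
    exact Finset.card_image_le

variable {d : ℕ} {π τ : Equiv.Perm (Fin (2 * d))} {j : Fin (2 * d)}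

theorem numBlocks_eq_card_image [DecidablePred fun a => ¬ IsFree d π a] :
    numBlocks d π =
      ((Finset.univ.filter fun a => ¬ IsFree d π a).image (classOf d π)).card := by
  simp only [numBlocks, Finset.filter_image, one_lt_card_classOf_iff]

theorem numSingletons_add_two_le (hj : IsFree d π j) (hj' : ¬ IsFree d τ j)
    (hle : ∀ a b, ApproxSim d π a b → ApproxSim d τ a b) :
    numSingletons d τ + 2 ≤ numSingletons d π := by
  classical
  have hdisj : Disjoint (Finset.univ.filter (IsFree d τ)) {j, partner d j} := by
    simp [Finset.disjoint_insert_right, isFree_partner_iff, hj']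
  have hsub : Finset.univ.filter (IsFree d τ) ∪ {j, partner d j} ⊆
      Finset.univ.filter (IsFree d π) := by
    intro a ha
    simp only [Finset.mem_union, Finset.mem_filter, Finset.mem_univ, true_and,
      Finset.mem_insert, Finset.mem_singleton] at ha ⊢
    rcases ha with ha | rfl | rfl
    · exact fun b hab => ha b (hle a b hab)
    · exact hj
    · exact isFree_partner_iff.2 hj
  have hcard := Finset.card_le_card hsub
  rwa [Finset.card_union_of_disjoint hdisj, Finset.card_pair (partner_ne j).symm] at hcard

theorem numBlocks_le_add_one (hle : ∀ a b, ApproxSim d π a b → ApproxSim d τ a b)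
    (hnew : ∀ a, IsFree d π a → ¬ IsFree d τ a → ApproxSim d τ a j) :
    numBlocks d τ ≤ numBlocks d π + 1 := by
  classical
  set N := Finset.univ.filter fun a => ¬ IsFree d π a
  have hsub : (Finset.univ.filter fun a => ¬ IsFree d τ a).image (classOf d τ) ⊆
      insert (classOf d τ j) (N.image (classOf d τ)) := by
    refine Finset.image_subset_iff.2 fun a ha => ?_
    by_cases hfree : IsFree d π a
    · rw [classOf_eq_classOf_iff.2 (hnew a hfree (Finset.mem_filter.1 ha).2)]
      exact Finset.mem_insert_self _ _
    · exact Finset.mem_insert_of_mem (Finset.mem_image_of_mem _ (by simp [N, hfree]))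
  have hcoarser : (N.image (classOf d τ)).card ≤ (N.image (classOf d π)).card :=
    card_image_le_card_image_of_factorsThrough (fun a b hab =>
      classOf_eq_classOf_iff.2 (hle a b (classOf_eq_classOf_iff.1 hab))) N
  calc numBlocks d τ
      = ((Finset.univ.filter fun a => ¬ IsFree d τ a).image (classOf d τ)).card :=
        numBlocks_eq_card_image
    _ ≤ (N.image (classOf d τ)).card + 1 :=
        (Finset.card_le_card hsub).trans (Finset.card_insert_le _ _)
    _ ≤ (N.image (classOf d π)).card + 1 := Nat.add_le_add_right hcoarser 1
    _ = numBlocks d π + 1 := by rw [numBlocks_eq_card_image]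

theorem one_le_nu_sub_nu (hj : IsFree d π j) (hj' : ¬ IsFree d τ j)
    (hle : ∀ a b, ApproxSim d π a b → ApproxSim d τ a b)
    (hnew : ∀ a, IsFree d π a → ¬ IsFree d τ a → ApproxSim d τ a j) :
    1 ≤ nu d π - nu d τ := by
  have hS : (numSingletons d τ : ℚ) + 2 ≤ numSingletons d π := by
    exact_mod_cast numSingletons_add_two_le hj hj' hle
  have hB : (numBlocks d τ : ℚ) ≤ numBlocks d π + 1 := by
    exact_mod_cast numBlocks_le_add_one hle hnew
  unfold nu
  linarith

end Potential

section ReversalBeforeFree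

variable {d : ℕ} {π : Equiv.Perm (Fin (2 * d))} {a b c j : Fin (2 * d)}

theorem IsFree.not_between (hc : IsFree d π c) (hab : Sim (2 * d) π a b)
    (hac : (π.symm a : ℕ) < π.symm c) : ¬ (π.symm c : ℕ) < π.symm b := fun hcb =>
  not_isFree_iff_sim_partner.2
    (hab.sim_of_cyclicNeighbor hac hcb (cyclicNeighbor_partner c).symm).symm hc

theorem IsFree.lt_of_sim_of_lt (hc : IsFree d π c) (hb : ¬ IsFree d π b)
    (hab : Sim (2 * d) π a b) (hac : (π.symm a : ℕ) < π.symm c) :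
    (π.symm b : ℕ) < π.symm c := by
  refine (not_lt.1 (hc.not_between hab hac)).lt_of_ne fun hbc => ?_
  exact hb (eq_of_val_symm_eq hbc ▸ hc)

theorem IsFree.sim_mul_prefixReversal (hc : IsFree d π c) (ha : ¬ IsFree d π a)
    (hb : ¬ IsFree d π b) (hab : Sim (2 * d) π a b) :
    Sim (2 * d) (π * prefixReversal (π.symm c).isLt.le) a b :=
  (sim_mul_prefixReversal_iff
    ⟨hc.lt_of_sim_of_lt hb hab, hc.lt_of_sim_of_lt ha hab.symm⟩).2 hab

theorem IsFree.approxSim_mul_prefixReversal (hc : IsFree d π c) (hab : ApproxSim d π a b) :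
    ApproxSim d (π * prefixReversal (π.symm c).isLt.le) a b := by
  have hnotFree {x : Fin (2 * d)} (hx : ¬ IsFree d π x) :
      ¬ IsFree d (π * prefixReversal (π.symm c).isLt.le) x :=
    not_isFree_iff_sim_partner.2 <| hc.sim_mul_prefixReversal hx (mt isFree_partner_iff.1 hx)
      (not_isFree_iff_sim_partner.1 hx)
  rw [approxSim_iff] at hab ⊢
  exact hab.imp_right fun ⟨hsim, ha, hb⟩ =>
    ⟨hc.sim_mul_prefixReversal ha hb hsim, hnotFree ha, hnotFree hb⟩

theorem IsFree.sim_first_mul_prefixReversal {p : ℕ} {hp : p ≤ 2 * d} (ha : IsFree d π a)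
    (ha' : ¬ IsFree d (π * prefixReversal hp) a) (hj : (π.symm j : ℕ) = 0) :
    Sim (2 * d) (π * prefixReversal hp) a j := by
  have hsim := not_isFree_iff_sim_partner.1 ha'
  have hcross : ¬ ((π.symm a : ℕ) < p ↔ (π.symm (partner d a) : ℕ) < p) := fun h =>
    not_isFree_iff_sim_partner.2 ((sim_mul_prefixReversal_iff h).1 hsim) ha
  refine hsim.of_between ?_ ?_ <;>
  · simp only [val_symm_mul_prefixReversal]
    split_ifs <;> omega

theorem not_isFree_mul_prefixReversal_partner (hj : (π.symm j : ℕ) = 0) :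
    ¬ IsFree d (π * prefixReversal (π.symm (partner d j)).isLt.le) j := by
  have hpos : (π.symm (partner d j) : ℕ) ≠ π.symm j := mt eq_of_val_symm_eq (partner_ne j)
  refine not_isFree_iff_sim_partner.2 ((cyclicNeighbor_partner j).sim ?_)
  simp only [val_symm_mul_prefixReversal]
  split_ifs <;> omega

end ReversalBeforeFree

/-- Let `k = 2d`, `d ≥ 1`, and `π ∈ S_k` with `ν(π) > 2`. If
`j = π(1)` is free, then there is `τ` related to `π` by a single prefix reversal with
`ν(π) - ν(τ) ≥ 1`. -/
theorem statement_11 (d : ℕ) (hd : 1 ≤ d) (π : Equiv.Perm (Fin (2 * d)))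
    (hν : 2 < nu d π) (hfree : IsFree d π (π ⟨0, by omega⟩)) :
    ∃ τ : Equiv.Perm (Fin (2 * d)), PrefixRev (2 * d) π τ ∧
      1 ≤ nu d π - nu d τ := by
  set j := π ⟨0, by omega⟩
  have hpos : (π.symm j : ℕ) = 0 := by simp only [j, π.symm_apply_apply]
  have hj' := not_isFree_mul_prefixReversal_partner hpos
  refine ⟨_, prefixRev_mul_prefixReversal, one_le_nu_sub_nu hfree hj' ?_ ?_⟩
  · exact fun a b => (isFree_partner_iff.2 hfree).approxSim_mul_prefixReversal
  · exact fun a ha ha' =>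
      approxSim_iff.2 (Or.inr ⟨ha.sim_first_mul_prefixReversal ha' hpos, ha', hj'⟩)
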